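/- arXiv:1610.09072 — 3 statements merged into one kernel-verified Lean document; each statement's English description precedes it below -/
import Mathlib

section
/- Let y be uniformly distributed on the unit sphere of ℝ^d, let w = √d·y, and let v ∈ ℝ^d with z = ‖v‖. Then |E[cos(wᵀv)] − (e^{-z²/2} − e^{-z²/2}·z⁴/(4d))| ≤ e^{z²/2}·z⁴·(z⁴ + 8z² + 8)/(16d²). -/
open MeasureTheory ProbabilityTheory Real
open scoped RealInnerProductSpace

/-!
Write `d` for the dimension. By rotation invariance `∫ ⟪y, x⟫ ^ (2 * k + 2)` is proportional to
`‖x‖ ^ (2 * k + 2)`. Comparing the `t ^ 2`-coefficients along a line `x = e + t • f` and summing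
over an orthonormal basis of vectors `f` gives a recursion for the even moments: the `2k`-th moment
of `√d * ⟪y, e⟫` is the Gaussian one times `q k = ∏ j < k, (1 + 2 * j / d)⁻¹`. Hence, with
`z = ‖v‖`,
`E[cos ⟪√d • y, v⟫] = ∑ (-z ^ 2 / 2) ^ k / k! * q k`.
Since `∑ j < k, 2 * j / d = k * (k - 1) / d`, elementary product inequalities give
`|q k - (1 - k * (k - 1) / d)| ≤ (k * (k - 1) / d) ^ 2`. The terms `1` and `k * (k - 1) / d` sum to
the claimed approximation, and the error is summed by writing `(k * (k - 1)) ^ 2` in falling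
factorials.
-/

section ProductInequalities

variable {ι R : Type*} [CommRing R] [LinearOrder R] [IsStrictOrderedRing R]

lemma one_add_sum_le_prod_one_add {s : Finset ι} {a : ι → R} (ha : ∀ i ∈ s, 0 ≤ a i) :
    1 + ∑ i ∈ s, a i ≤ ∏ i ∈ s, (1 + a i) := by
  classical
  induction s using Finset.induction_on with
  | empty => simp
  | insert i s hi ih =>
    rw [Finset.forall_mem_insert] at ha
    have hsum := Finset.sum_nonneg ha.2
    rw [Finset.sum_insert hi, Finset.prod_insert hi]
    nlinarith [mul_le_mul_of_nonneg_left (ih ha.2) (add_nonneg zero_le_one ha.1),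
      mul_nonneg ha.1 hsum]

lemma prod_one_add_mul_one_sub_sum_le_one {s : Finset ι} {a : ι → R} (ha : ∀ i ∈ s, 0 ≤ a i) :
    (∏ i ∈ s, (1 + a i)) * (1 - ∑ i ∈ s, a i) ≤ 1 := by
  classical
  induction s using Finset.induction_on with
  | empty => simp
  | insert i s hi ih =>
    rw [Finset.forall_mem_insert] at ha
    have hsum := Finset.sum_nonneg ha.2
    have hprod : 0 ≤ ∏ i ∈ s, (1 + a i) :=
      Finset.prod_nonneg fun j hj => add_nonneg zero_le_one (ha.2 j hj)
    rw [Finset.sum_insert hi, Finset.prod_insert hi]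
    calc (1 + a i) * (∏ i ∈ s, (1 + a i)) * (1 - (a i + ∑ i ∈ s, a i))
        = (∏ i ∈ s, (1 + a i)) * (1 - ∑ i ∈ s, a i)
          - (∏ i ∈ s, (1 + a i)) * (a i * (a i + ∑ i ∈ s, a i)) := by ring
      _ ≤ (∏ i ∈ s, (1 + a i)) * (1 - ∑ i ∈ s, a i) :=
          sub_le_self _ (mul_nonneg hprod (mul_nonneg ha.1 (add_nonneg ha.1 hsum)))
      _ ≤ 1 := ih ha.2

lemma abs_prod_inv_one_add_sub_one_sub_sum_le {K : Type*} [Field K] [LinearOrder K]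
    [IsStrictOrderedRing K] {s : Finset ι} {a : ι → K} (ha : ∀ i ∈ s, 0 ≤ a i) :
    |∏ i ∈ s, (1 + a i)⁻¹ - (1 - ∑ i ∈ s, a i)| ≤ (∑ i ∈ s, a i) ^ 2 := by
  have hsum := Finset.sum_nonneg ha
  have hlower := one_add_sum_le_prod_one_add ha
  have hupper := prod_one_add_mul_one_sub_sum_le_one ha
  rw [Finset.prod_inv_distrib]
  set S := ∑ i ∈ s, a i
  set P := ∏ i ∈ s, (1 + a i)
  have hP : 0 < P := by linarith
  have hge : 1 - S ≤ P⁻¹ := by rwa [← one_div, le_div_iff₀ hP, mul_comm]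
  have hle : P⁻¹ ≤ 1 - S + S ^ 2 := by
    rw [inv_le_iff_one_le_mul₀ hP]
    have hpos : 0 ≤ 1 - S + S ^ 2 := by nlinarith [sq_nonneg (S - 1)]
    calc 1 ≤ 1 + S ^ 3 := le_add_of_nonneg_right (pow_nonneg hsum 3)
      _ = (1 - S + S ^ 2) * (1 + S) := by ring
      _ ≤ (1 - S + S ^ 2) * P := mul_le_mul_of_nonneg_left hlower hpos
  rw [abs_of_nonneg (sub_nonneg.mpr hge)]
  linarith

end ProductInequalities

section ExponentialSeries

lemma hasSum_pow_div_factorial_mul_descFactorial {𝕜 : Type*} [RCLike 𝕜] (x : 𝕜) (m : ℕ) :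
    HasSum (fun k : ℕ => x ^ k / (k.factorial : 𝕜) * (k.descFactorial m : 𝕜))
      (x ^ m * NormedSpace.exp x) := by
  have hvanish : ∑ k ∈ Finset.range m, x ^ k / (k.factorial : 𝕜) * (k.descFactorial m : 𝕜) = 0 :=
    Finset.sum_eq_zero fun k hk => by
      rw [Nat.descFactorial_of_lt (Finset.mem_range.mp hk), Nat.cast_zero, mul_zero]
  rw [← hasSum_nat_add_iff' m, hvanish, sub_zero]
  refine ((NormedSpace.expSeries_div_hasSum_exp x).mul_left (x ^ m)).congr_fun fun k => ?_
  have hfactorial : ((k + m).factorial : 𝕜) = k.factorial * (k + m).descFactorial m := by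
    have h := Nat.factorial_mul_descFactorial (Nat.le_add_left m k)
    rw [Nat.add_sub_cancel] at h
    exact_mod_cast h.symm
  have hk : (k.factorial : 𝕜) ≠ 0 := by exact_mod_cast k.factorial_ne_zero
  have hm : ((k + m).descFactorial m : 𝕜) ≠ 0 := by
    exact_mod_cast (Nat.descFactorial_pos.mpr (Nat.le_add_left m k)).ne'
  rw [hfactorial, pow_add]
  field_simp

lemma descFactorial_two_sq (k : ℕ) :
    k.descFactorial 2 ^ 2 =
      k.descFactorial 4 + 4 * k.descFactorial 3 + 2 * k.descFactorial 2 := by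
  rcases k with _ | _ | _ | k
  · rfl
  · rfl
  · rfl
  · simp only [Nat.succ_descFactorial_succ, Nat.descFactorial_zero, Nat.descFactorial_one]
    ring

lemma abs_sub_le_of_hasSum_pow_div_factorial_mul {c x I : ℝ} {q : ℕ → ℝ}
    (hq : ∀ k, |q k - (1 - c * k.descFactorial 2)| ≤ (c * k.descFactorial 2) ^ 2)
    (hI : HasSum (fun k : ℕ => x ^ k / (k.factorial : ℝ) * q k) I) :
    |I - (1 - c * x ^ 2) * exp x| ≤ c ^ 2 * (x ^ 4 + 4 * |x| ^ 3 + 2 * x ^ 2) * exp |x| := by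
  have hexp (y : ℝ) (m : ℕ) :
      HasSum (fun k : ℕ => y ^ k / (k.factorial : ℝ) * k.descFactorial m) (y ^ m * exp y) := by
    rw [Real.exp_eq_exp_ℝ]
    exact hasSum_pow_div_factorial_mul_descFactorial y m
  have herror := hI.sub ((hexp x 0).sub ((hexp x 2).mul_left c))
  have hbound := (((hexp |x| 4).add ((hexp |x| 3).mul_left 4)).add
    ((hexp |x| 2).mul_left 2)).mul_left (c ^ 2)
  have hle := herror.norm_le_of_bounded hbound fun k => ?_
  · calc |I - (1 - c * x ^ 2) * exp x|
        = |I - (x ^ 0 * exp x - c * (x ^ 2 * exp x))| := by congr 1; ring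
      _ ≤ _ := hle
      _ = c ^ 2 * (x ^ 4 + 4 * |x| ^ 3 + 2 * x ^ 2) * exp |x| := by
        rw [← sq_abs x, ← Even.pow_abs (by decide : Even 4) x]; ring
  · have hsq : (k.descFactorial 2 : ℝ) ^ 2 =
        k.descFactorial 4 + 4 * k.descFactorial 3 + 2 * k.descFactorial 2 := by
      exact_mod_cast descFactorial_two_sq k
    calc ‖x ^ k / (k.factorial : ℝ) * q k -
          (x ^ k / (k.factorial : ℝ) * k.descFactorial 0 -
            c * (x ^ k / (k.factorial : ℝ) * k.descFactorial 2))‖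
        = ‖x ^ k / (k.factorial : ℝ) * (q k - (1 - c * k.descFactorial 2))‖ := by
          rw [Nat.descFactorial_zero, Nat.cast_one]; ring_nf
      _ = |x| ^ k / (k.factorial : ℝ) * |q k - (1 - c * k.descFactorial 2)| := by
          rw [Real.norm_eq_abs, abs_mul, abs_div, abs_pow, Nat.abs_cast]
      _ ≤ |x| ^ k / (k.factorial : ℝ) * (c * k.descFactorial 2) ^ 2 := by gcongr; exact hq k
      _ = _ := by rw [mul_pow, hsq]; ring

end ExponentialSeries

/-- The ratio `∏ j < k, (1 + 2 * j / d)⁻¹` of the `2k`-th moment of a coordinate of a uniform point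
on the sphere of radius `√d` in dimension `d` to the `2k`-th moment of a standard Gaussian. The
dimension is a real number, to avoid casts. -/
noncomputable def sphereGaussianMomentRatio (d : ℝ) (k : ℕ) : ℝ :=
  ∏ j ∈ Finset.range k, (1 + 2 * j / d)⁻¹

lemma sphereGaussianMomentRatio_succ (d : ℝ) (k : ℕ) :
    sphereGaussianMomentRatio d (k + 1) =
      sphereGaussianMomentRatio d k * (1 + 2 * k / d)⁻¹ :=
  Finset.prod_range_succ _ k

lemma abs_sphereGaussianMomentRatio_sub_le {d : ℝ} (hd : 0 ≤ d) (k : ℕ) :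
    |sphereGaussianMomentRatio d k - (1 - d⁻¹ * k.descFactorial 2)| ≤
      (d⁻¹ * k.descFactorial 2) ^ 2 := by
  have hsum : ∑ j ∈ Finset.range k, 2 * (j : ℝ) / d = d⁻¹ * k.descFactorial 2 := by
    have hrange : (∑ j ∈ Finset.range k, j) * 2 = k.descFactorial 2 := by
      rw [Finset.sum_range_id_mul_two, mul_comm]
      simp [Nat.descFactorial_succ]
    rw [← hrange, ← Finset.sum_div, ← Finset.mul_sum]
    push_cast
    ring
  rw [← hsum]
  exact abs_prod_inv_one_add_sub_one_sub_sum_le fun j _ => by positivity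

lemma hasSum_integral_cos {Ω : Type*} [MeasurableSpace Ω] {μ : Measure Ω} {f : Ω → ℝ}
    (hf : AEStronglyMeasurable f μ) (hcosh : Integrable (fun ω => cosh (f ω)) μ) :
    HasSum (fun k : ℕ => (-1) ^ k / ((2 * k).factorial : ℝ) * ∫ ω, f ω ^ (2 * k) ∂μ)
      (∫ ω, cos (f ω) ∂μ) := by
  simp_rw [← integral_const_mul]
  refine hasSum_integral_of_dominated_convergence
    (fun k ω => f ω ^ (2 * k) / ((2 * k).factorial : ℝ)) (fun k => (hf.pow _).const_mul _)
    (fun k => .of_forall fun ω => ?_) (.of_forall fun ω => (hasSum_cosh (f ω)).summable) ?_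
    (.of_forall fun ω => ?_)
  · rw [norm_mul, norm_div, norm_pow, norm_neg, norm_one, one_pow, RCLike.norm_natCast,
      Real.norm_of_nonneg ((even_two_mul k).pow_nonneg _), one_div_mul_eq_div]
  · simpa only [← cosh_eq_tsum] using hcosh
  · exact (hasSum_cos (f ω)).congr_fun fun k => by ring

lemma coeff_two_one_add_linear_add_quadratic_pow {R : Type*} [CommSemiring R] (p q : R) (n : ℕ) :
    ((1 + Polynomial.C p * Polynomial.X + Polynomial.C q * Polynomial.X ^ 2) ^ n).coeff 2 =
      n * q + n.choose 2 * p ^ 2 := by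
  set P := 1 + Polynomial.C p * Polynomial.X + Polynomial.C q * Polynomial.X ^ 2 with hP
  have h0 : P.coeff 0 = 1 := by simp [hP]
  have h1 : P.coeff 1 = p := by simp [hP, Polynomial.coeff_one, Polynomial.coeff_X_pow]
  have h2 : P.coeff 2 = q := by simp [hP, Polynomial.coeff_one]
  have hpow0 (n : ℕ) : (P ^ n).coeff 0 = 1 := by
    rw [← Polynomial.constantCoeff_apply, map_pow, Polynomial.constantCoeff_apply, h0, one_pow]
  have hpow1 (n : ℕ) : (P ^ n).coeff 1 = n * p := by
    induction n with
    | zero => simp [Polynomial.coeff_one]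
    | succ n ih =>
      rw [pow_succ, Polynomial.mul_coeff_one, hpow0, ih, h0, h1]
      push_cast
      ring
  induction n with
  | zero => simp [Polynomial.coeff_one]
  | succ n ih =>
    rw [pow_succ, Polynomial.coeff_mul, Finset.Nat.sum_antidiagonal_eq_sum_range_succ_mk]
    simp only [Finset.sum_range_succ, Finset.sum_range_zero, hpow0, hpow1, ih, h0, h1, h2,
      Nat.sub_zero, Nat.reduceSub, Nat.choose_succ_succ' n 1, Nat.choose_one_right]
    push_cast
    ring

section IsometryInvariant

variable {E : Type*} [NormedAddCommGroup E] [InnerProductSpace ℝ E] [MeasurableSpace E]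
  [BorelSpace E] {μ : Measure E}

lemma integral_comp_inner_eq_of_norm_eq {G : Type*} [NormedAddCommGroup G] [NormedSpace ℝ G]
    (hrot : ∀ T : E ≃ₗᵢ[ℝ] E, μ.map T = μ) (F : ℝ → G) {u w : E} (h : ‖u‖ = ‖w‖) :
    ∫ y, F ⟪y, u⟫ ∂μ = ∫ y, F ⟪y, w⟫ ∂μ := by
  set T := (ℝ ∙ (u - w))ᗮ.reflection
  have hT : T u = w := Submodule.reflection_sub h
  calc ∫ y, F ⟪y, u⟫ ∂μ = ∫ y, F ⟪T y, w⟫ ∂μ := by simp_rw [← hT, T.inner_map_map]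
    _ = ∫ y, F ⟪y, w⟫ ∂(μ.map T) :=
      (T.toHomeomorph.measurableEmbedding.integral_map fun y => F ⟪y, w⟫).symm
    _ = ∫ y, F ⟪y, w⟫ ∂μ := by rw [hrot]

lemma integral_inner_pow_two_mul_eq_norm_pow_mul (hrot : ∀ T : E ≃ₗᵢ[ℝ] E, μ.map T = μ)
    {e : E} (he : ‖e‖ = 1) (x : E) (k : ℕ) :
    ∫ y, ⟪y, x⟫ ^ (2 * k) ∂μ = (‖x‖ ^ 2) ^ k * ∫ y, ⟪y, e⟫ ^ (2 * k) ∂μ := by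
  have hnorm : ‖x‖ = ‖‖x‖ • e‖ := by rw [norm_smul, he, mul_one, norm_norm]
  rw [integral_comp_inner_eq_of_norm_eq hrot (· ^ (2 * k)) hnorm]
  simp_rw [inner_smul_right, mul_pow, integral_const_mul, pow_mul]

lemma integrable_inner_pow_mul_inner_pow {m n : ℕ}
    (hint : Integrable (fun y : E => ‖y‖ ^ (m + n)) μ) (u w : E) :
    Integrable (fun y => ⟪y, u⟫ ^ m * ⟪y, w⟫ ^ n) μ := by
  refine (hint.mul_const (‖u‖ ^ m * ‖w‖ ^ n)).mono'
    (Continuous.aestronglyMeasurable (by fun_prop)) (.of_forall fun y => ?_)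
  calc ‖⟪y, u⟫ ^ m * ⟪y, w⟫ ^ n‖ = ‖⟪y, u⟫‖ ^ m * ‖⟪y, w⟫‖ ^ n := by
        rw [norm_mul, norm_pow, norm_pow]
    _ ≤ (‖y‖ * ‖u‖) ^ m * (‖y‖ * ‖w‖) ^ n := by gcongr <;> exact norm_inner_le_norm _ _
    _ = ‖y‖ ^ (m + n) * (‖u‖ ^ m * ‖w‖ ^ n) := by ring

lemma integral_inner_add_smul_pow {N : ℕ} (hint : Integrable (fun y : E => ‖y‖ ^ N) μ)
    (u w : E) (t : ℝ) :
    ∫ y, ⟪y, u + t • w⟫ ^ N ∂μ =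
      ∑ n ∈ Finset.range (N + 1),
        (N.choose n * ∫ y, ⟪y, u⟫ ^ (N - n) * ⟪y, w⟫ ^ n ∂μ) * t ^ n := by
  have hexpand (y : E) : ⟪y, u + t • w⟫ ^ N =
      ∑ n ∈ Finset.range (N + 1),
        (N.choose n * t ^ n) * (⟪y, u⟫ ^ (N - n) * ⟪y, w⟫ ^ n) := by
    rw [inner_add_right, inner_smul_right, add_comm, add_pow]
    exact Finset.sum_congr rfl fun n _ => by ring
  have hterm (n : ℕ) (hn : n ∈ Finset.range (N + 1)) :
      Integrable (fun y => ⟪y, u⟫ ^ (N - n) * ⟪y, w⟫ ^ n) μ := by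
    refine integrable_inner_pow_mul_inner_pow ?_ u w
    rwa [Nat.sub_add_cancel (Finset.mem_range_succ_iff.mp hn)]
  simp_rw [hexpand]
  rw [integral_finsetSum _ fun n hn => (hterm n hn).const_mul _]
  refine Finset.sum_congr rfl fun n _ => ?_
  rw [integral_const_mul]
  ring

lemma integral_inner_pow_mul_inner_sq (hrot : ∀ T : E ≃ₗᵢ[ℝ] E, μ.map T = μ) {k : ℕ}
    (hint : Integrable (fun y : E => ‖y‖ ^ (2 * k + 2)) μ) {e : E} (he : ‖e‖ = 1) (f : E) :
    (2 * k + 1) * ∫ y, ⟪y, e⟫ ^ (2 * k) * ⟪y, f⟫ ^ 2 ∂μ =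
      (‖f‖ ^ 2 + 2 * k * ⟪e, f⟫ ^ 2) * ∫ y, ⟪y, e⟫ ^ (2 * k + 2) ∂μ := by
  set M := ∫ y, ⟪y, e⟫ ^ (2 * k + 2) ∂μ
  set c : ℕ → ℝ := fun n =>
    (2 * k + 2).choose n * ∫ y, ⟪y, e⟫ ^ (2 * k + 2 - n) * ⟪y, f⟫ ^ n ∂μ with hc
  have hpoly : ∑ n ∈ Finset.range (2 * k + 2 + 1), Polynomial.C (c n) * Polynomial.X ^ n =
      (1 + Polynomial.C (2 * ⟪e, f⟫) * Polynomial.X + Polynomial.C (‖f‖ ^ 2) * Polynomial.X ^ 2) ^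
        (k + 1) * Polynomial.C M := by
    refine Polynomial.funext fun t => ?_
    have hnorm : ‖e + t • f‖ ^ 2 = 1 + 2 * ⟪e, f⟫ * t + ‖f‖ ^ 2 * t ^ 2 := by
      rw [norm_add_sq_real, inner_smul_right, norm_smul, mul_pow, Real.norm_eq_abs, sq_abs, he]
      ring
    have hhom := integral_inner_pow_two_mul_eq_norm_pow_mul hrot he (e + t • f) (k + 1)
    rw [mul_add_one, integral_inner_add_smul_pow hint, hnorm] at hhom
    simpa only [Polynomial.eval_finsetSum, Polynomial.eval_mul, Polynomial.eval_C,
      Polynomial.eval_pow, Polynomial.eval_X, Polynomial.eval_add, Polynomial.eval_one] using hhom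
  have hcoeff : c 2 = ((k + 1) * ‖f‖ ^ 2 + (k + 1) * k / 2 * (2 * ⟪e, f⟫) ^ 2) * M := by
    have h := congrArg (Polynomial.coeff · 2) hpoly
    rw [Polynomial.finsetSum_coeff, Polynomial.coeff_mul_C,
      coeff_two_one_add_linear_add_quadratic_pow, Nat.cast_choose_two] at h
    simpa [Polynomial.coeff_X_pow] using h
  rw [hc] at hcoeff
  simp only [Nat.cast_choose_two, Nat.add_sub_cancel] at hcoeff
  push_cast at hcoeff
  have hk : (k : ℝ) + 1 ≠ 0 := by positivity
  refine mul_left_cancel₀ hk ?_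
  linear_combination hcoeff

lemma integral_inner_pow_mul_norm_sq [FiniteDimensional ℝ E]
    (hrot : ∀ T : E ≃ₗᵢ[ℝ] E, μ.map T = μ) {k : ℕ}
    (hint : Integrable (fun y : E => ‖y‖ ^ (2 * k + 2)) μ) {e : E} (he : ‖e‖ = 1) :
    (2 * k + 1) * ∫ y, ⟪y, e⟫ ^ (2 * k) * ‖y‖ ^ 2 ∂μ =
      (Module.finrank ℝ E + 2 * k) * ∫ y, ⟪y, e⟫ ^ (2 * k + 2) ∂μ := by
  let b := stdOrthonormalBasis ℝ E
  calc (2 * k + 1) * ∫ y, ⟪y, e⟫ ^ (2 * k) * ‖y‖ ^ 2 ∂μ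
      = ∑ i, (2 * k + 1) * ∫ y, ⟪y, e⟫ ^ (2 * k) * ⟪y, b i⟫ ^ 2 ∂μ := by
        simp_rw [← b.sum_sq_inner_left, Finset.mul_sum]
        rw [integral_finsetSum _ fun i _ => integrable_inner_pow_mul_inner_pow hint e (b i),
          Finset.mul_sum]
    _ = (∑ i, (‖b i‖ ^ 2 + 2 * k * ⟪e, b i⟫ ^ 2)) * ∫ y, ⟪y, e⟫ ^ (2 * k + 2) ∂μ := by
        simp_rw [integral_inner_pow_mul_inner_sq hrot hint he, Finset.sum_mul]
    _ = (Module.finrank ℝ E + 2 * k) * ∫ y, ⟪y, e⟫ ^ (2 * k + 2) ∂μ := by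
        rw [Finset.sum_add_distrib, ← Finset.mul_sum, b.sum_sq_inner_left, he]
        simp

end IsometryInvariant

section UnitSphere

lemma finrank_pos_of_ae_norm_eq_one {E : Type*} [NormedAddCommGroup E] [NormedSpace ℝ E]
    [FiniteDimensional ℝ E] [MeasurableSpace E] {μ : Measure E} [NeZero μ]
    (hsph : ∀ᵐ u ∂μ, ‖u‖ = 1) : 0 < Module.finrank ℝ E := by
  obtain ⟨e, he⟩ := hsph.exists
  exact Module.finrank_pos_iff_exists_ne_zero.mpr ⟨e, norm_ne_zero_iff.mp (by simp [he])⟩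

variable {E : Type*} [NormedAddCommGroup E] [InnerProductSpace ℝ E] [MeasurableSpace E]
  [BorelSpace E] {μ : Measure E}

lemma hasSum_integral_cos_inner [IsFiniteMeasure μ] (hsph : ∀ᵐ u ∂μ, ‖u‖ = 1) (x : E) :
    HasSum (fun k : ℕ => (-1) ^ k / ((2 * k).factorial : ℝ) * ∫ y, ⟪y, x⟫ ^ (2 * k) ∂μ)
      (∫ y, cos ⟪y, x⟫ ∂μ) := by
  refine hasSum_integral_cos (Continuous.aestronglyMeasurable (by fun_prop)) ?_
  refine Integrable.of_bound (Continuous.aestronglyMeasurable (by fun_prop)) (cosh ‖x‖) ?_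
  filter_upwards [hsph] with y hy
  rw [Real.norm_of_nonneg (cosh_pos _).le, cosh_le_cosh, abs_norm]
  simpa only [hy, one_mul] using abs_real_inner_le_norm y x

variable [FiniteDimensional ℝ E] [IsProbabilityMeasure μ]

lemma integral_inner_pow_two_mul_of_norm_eq_one (hsph : ∀ᵐ u ∂μ, ‖u‖ = 1)
    (hrot : ∀ T : E ≃ₗᵢ[ℝ] E, μ.map T = μ) {e : E} (he : ‖e‖ = 1) (k : ℕ) :
    ∫ y, ⟪y, e⟫ ^ (2 * k) ∂μ = ((2 * k).factorial : ℝ) / k.factorial *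
      sphereGaussianMomentRatio (Module.finrank ℝ E) k / (2 * Module.finrank ℝ E) ^ k := by
  have hd : (0 : ℝ) < Module.finrank ℝ E := by exact_mod_cast finrank_pos_of_ae_norm_eq_one hsph
  induction k with
  | zero => simp [sphereGaussianMomentRatio]
  | succ k ih =>
    have hint : Integrable (fun y : E => ‖y‖ ^ (2 * k + 2)) μ :=
      (integrable_const (1 : ℝ)).congr (hsph.mono fun y hy => by simp [hy])
    have hrec := integral_inner_pow_mul_norm_sq hrot hint he
    have hnorm : ∫ y, ⟪y, e⟫ ^ (2 * k) * ‖y‖ ^ 2 ∂μ = ∫ y, ⟪y, e⟫ ^ (2 * k) ∂μ :=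
      integral_congr_ae (hsph.mono fun y hy => by simp [hy])
    rw [hnorm, ih] at hrec
    have hne : (Module.finrank ℝ E : ℝ) + 2 * k ≠ 0 := by positivity
    rw [mul_add_one, sphereGaussianMomentRatio_succ, Nat.factorial_succ (2 * k + 1),
      Nat.factorial_succ (2 * k), Nat.factorial_succ k]
    refine mul_left_cancel₀ hne ?_
    rw [← hrec]
    push_cast
    field_simp
    ring

lemma integral_inner_pow_two_mul (hsph : ∀ᵐ u ∂μ, ‖u‖ = 1)
    (hrot : ∀ T : E ≃ₗᵢ[ℝ] E, μ.map T = μ) (x : E) (k : ℕ) :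
    ∫ y, ⟪y, x⟫ ^ (2 * k) ∂μ = ((2 * k).factorial : ℝ) / k.factorial *
      sphereGaussianMomentRatio (Module.finrank ℝ E) k *
        (‖x‖ ^ 2 / (2 * Module.finrank ℝ E)) ^ k := by
  obtain ⟨e, he⟩ := hsph.exists
  rw [integral_inner_pow_two_mul_eq_norm_pow_mul hrot he,
    integral_inner_pow_two_mul_of_norm_eq_one hsph hrot he, div_pow]
  ring

lemma hasSum_integral_cos_inner_sqrt_smul (hsph : ∀ᵐ u ∂μ, ‖u‖ = 1)
    (hrot : ∀ T : E ≃ₗᵢ[ℝ] E, μ.map T = μ) (v : E) :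
    HasSum (fun k : ℕ => (-‖v‖ ^ 2 / 2) ^ k / (k.factorial : ℝ) *
        sphereGaussianMomentRatio (Module.finrank ℝ E) k)
      (∫ y, cos ⟪√(Module.finrank ℝ E) • y, v⟫ ∂μ) := by
  have hd : (0 : ℝ) < Module.finrank ℝ E := by exact_mod_cast finrank_pos_of_ae_norm_eq_one hsph
  have hnorm : ‖√(Module.finrank ℝ E : ℝ) • v‖ ^ 2 / (2 * Module.finrank ℝ E) = ‖v‖ ^ 2 / 2 := by
    rw [norm_smul, mul_pow, Real.norm_eq_abs, sq_abs, Real.sq_sqrt hd.le]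
    field_simp
  simp_rw [real_inner_smul_left, ← real_inner_smul_right]
  refine (hasSum_integral_cos_inner hsph _).congr_fun fun k => ?_
  rw [integral_inner_pow_two_mul hsph hrot, hnorm, neg_div, neg_pow]
  field_simp

theorem stmt_6_general (hsph : ∀ᵐ u ∂μ, ‖u‖ = 1)
    (hrot : ∀ T : E ≃ₗᵢ[ℝ] E, μ.map T = μ) (v : E) :
    |(∫ y, cos ⟪√(Module.finrank ℝ E) • y, v⟫ ∂μ) - (exp (-‖v‖ ^ 2 / 2) -
        exp (-‖v‖ ^ 2 / 2) * ‖v‖ ^ 4 / (4 * Module.finrank ℝ E))| ≤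
      exp (‖v‖ ^ 2 / 2) * ‖v‖ ^ 4 * (‖v‖ ^ 4 + 8 * ‖v‖ ^ 2 + 8) /
        (16 * Module.finrank ℝ E ^ 2) := by
  have habs : |-‖v‖ ^ 2 / 2| = ‖v‖ ^ 2 / 2 := by
    rw [neg_div, abs_neg, abs_of_nonneg (by positivity)]
  have hle := abs_sub_le_of_hasSum_pow_div_factorial_mul
    (abs_sphereGaussianMomentRatio_sub_le (Nat.cast_nonneg _))
    (hasSum_integral_cos_inner_sqrt_smul hsph hrot v)
  rw [habs] at hle
  convert hle using 1
  · congr 2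
    ring
  · ring

end UnitSphere

/-- if `y` is uniformly distributed on the unit sphere of `ℝ^d` (a probability
measure supported on the sphere and invariant under all rotations), `w = √d·y`, and
`v ∈ ℝ^d` with `z = ‖v‖`, then
`|E[cos(wᵀv)] − (e^{-z²/2} − e^{-z²/2}·z⁴/(4d))| ≤ e^{z²/2}·z⁴·(z⁴+8z²+8)/(16d²)`. -/
theorem stmt_6 (d : ℕ) (μ : Measure (EuclideanSpace ℝ (Fin d)))
    (hprob : IsProbabilityMeasure μ) (hsph : ∀ᵐ u ∂μ, ‖u‖ = 1)
    (hrot : ∀ T : EuclideanSpace ℝ (Fin d) ≃ₗᵢ[ℝ] EuclideanSpace ℝ (Fin d), μ.map T = μ)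
    (v : EuclideanSpace ℝ (Fin d)) :
    |(∫ y, Real.cos ⟪Real.sqrt d • y, v⟫ ∂μ)
        - (Real.exp (-‖v‖ ^ 2 / 2) - Real.exp (-‖v‖ ^ 2 / 2) * ‖v‖ ^ 4 / (4 * d))|
      ≤ Real.exp (‖v‖ ^ 2 / 2) * ‖v‖ ^ 4 * (‖v‖ ^ 4 + 8 * ‖v‖ ^ 2 + 8) / (16 * d ^ 2) := by
  simpa only [finrank_euclideanSpace_fin] using stmt_6_general hsph hrot v
end

section
/- Let α_1,…,α_k be nonnegative real numbers. Then |1/∏_{i=1}^k (1+α_i) − (1 − Σ_{i=1}^k α_i)| ≤ (Σ_{i=1}^k α_i)². -/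
/-!
Write `S = ∑ αᵢ` and `P = ∏ (1 + αᵢ)`. Induction on the index set gives both `1 + S ≤ P` and
`(1 - S) * P ≤ 1`, that is, `1 - S ≤ 1 / P ≤ 1 / (1 + S)`. Since `(1 + S) * (1 - S + S²) = 1 + S³`,
the upper bound is at most `1 - S + S²`.
-/

open Finset

section OrderedRing

variable {ι R : Type*} {s : Finset ι} {f : ι → R}

theorem one_add_sum_le_prod_one_add_s9 [CommSemiring R] [PartialOrder R] [IsOrderedRing R]
    (hf : ∀ i ∈ s, 0 ≤ f i) : 1 + ∑ i ∈ s, f i ≤ ∏ i ∈ s, (1 + f i) := by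
  induction s using Finset.cons_induction with
  | empty => simp
  | cons a s ha ih =>
    obtain ⟨hfa, hfs⟩ := forall_mem_cons ha _ |>.mp hf
    have hsum : 0 ≤ ∑ i ∈ s, f i := sum_nonneg hfs
    rw [sum_cons, prod_cons]
    calc 1 + (f a + ∑ i ∈ s, f i)
        ≤ 1 + (f a + ∑ i ∈ s, f i) + f a * ∑ i ∈ s, f i :=
          le_add_of_nonneg_right (mul_nonneg hfa hsum)
      _ = (1 + f a) * (1 + ∑ i ∈ s, f i) := by ring
      _ ≤ (1 + f a) * ∏ i ∈ s, (1 + f i) :=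
          mul_le_mul_of_nonneg_left (ih hfs) (add_nonneg zero_le_one hfa)

theorem one_sub_sum_mul_prod_one_add_le_one [CommRing R] [PartialOrder R] [IsOrderedRing R]
    (hf : ∀ i ∈ s, 0 ≤ f i) : (1 - ∑ i ∈ s, f i) * ∏ i ∈ s, (1 + f i) ≤ 1 := by
  induction s using Finset.cons_induction with
  | empty => simp
  | cons a s ha ih =>
    obtain ⟨hfa, hfs⟩ := forall_mem_cons ha _ |>.mp hf
    have hsum : 0 ≤ ∑ i ∈ s, f i := sum_nonneg hfs
    have hprod : 0 ≤ ∏ i ∈ s, (1 + f i) :=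
      prod_nonneg fun i hi ↦ add_nonneg zero_le_one (hfs i hi)
    rw [sum_cons, prod_cons]
    calc (1 - (f a + ∑ i ∈ s, f i)) * ((1 + f a) * ∏ i ∈ s, (1 + f i))
        = (1 - ∑ i ∈ s, f i) * ∏ i ∈ s, (1 + f i)
            - f a * (f a + ∑ i ∈ s, f i) * ∏ i ∈ s, (1 + f i) := by ring
      _ ≤ (1 - ∑ i ∈ s, f i) * ∏ i ∈ s, (1 + f i) := sub_le_self _ (by positivity)
      _ ≤ 1 := ih hfs

end OrderedRing

section OrderedField

variable {ι K : Type*} [Field K] [LinearOrder K] [IsStrictOrderedRing K]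

theorem one_div_one_add_le_one_sub_add_sq {x : K} (hx : 0 ≤ x) :
    1 / (1 + x) ≤ 1 - x + x ^ 2 := by
  rw [div_le_iff₀ (by positivity)]
  calc 1 ≤ 1 + x ^ 3 := le_add_of_nonneg_right (pow_nonneg hx 3)
    _ = (1 - x + x ^ 2) * (1 + x) := by ring

variable {s : Finset ι} {f : ι → K}

theorem one_sub_sum_le_one_div_prod_one_add (hf : ∀ i ∈ s, 0 ≤ f i) :
    1 - ∑ i ∈ s, f i ≤ 1 / ∏ i ∈ s, (1 + f i) :=
  (le_div_iff₀ (prod_pos fun i hi ↦ add_pos_of_pos_of_nonneg one_pos (hf i hi))).mpr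
    (one_sub_sum_mul_prod_one_add_le_one hf)

theorem one_div_prod_one_add_le_one_div_one_add_sum (hf : ∀ i ∈ s, 0 ≤ f i) :
    1 / ∏ i ∈ s, (1 + f i) ≤ 1 / (1 + ∑ i ∈ s, f i) :=
  one_div_le_one_div_of_le (add_pos_of_pos_of_nonneg one_pos (sum_nonneg hf))
    (one_add_sum_le_prod_one_add_s9 hf)

theorem stmt_9_general (hf : ∀ i ∈ s, 0 ≤ f i) :
    |1 / ∏ i ∈ s, (1 + f i) - (1 - ∑ i ∈ s, f i)| ≤ (∑ i ∈ s, f i) ^ 2 := by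
  have lower := one_sub_sum_le_one_div_prod_one_add hf
  have upper := (one_div_prod_one_add_le_one_div_one_add_sum hf).trans
    (one_div_one_add_le_one_sub_add_sq (sum_nonneg hf))
  rw [abs_of_nonneg (sub_nonneg.mpr lower)]
  exact sub_le_iff_le_add'.mpr upper

end OrderedField

/-- for nonnegative reals `α₁,…,α_k`,
`|1/∏ᵢ(1+αᵢ) − (1 − Σᵢ αᵢ)| ≤ (Σᵢ αᵢ)²`. -/
theorem stmt_9 (k : ℕ) (α : Fin k → ℝ) (hα : ∀ i, 0 ≤ α i) :
    |1 / ∏ i, (1 + α i) - (1 - ∑ i, α i)| ≤ (∑ i, α i) ^ 2 :=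
  stmt_9_general fun i _ ↦ hα i
end

section
/- Let α_1,…,α_k and β_1,…,β_k be nonnegative real numbers with β_i ≤ α_i for all i. Then |∏_{i=1}^k (1+β_i)/(1+α_i) − (1 + Σ_{i=1}^k β_i − Σ_{i=1}^k α_i)| ≤ (Σ_{i=1}^k (α_i − β_i))² + Σ_{i=1}^k (α_i − β_i)·β_i. -/
/-!
Put `dᵢ = αᵢ - βᵢ` and `zᵢ = dᵢ / (1 + αᵢ)`, so that the product is `∏ (1 - zᵢ)` with
`0 ≤ zᵢ ≤ 1` and `zᵢ ≤ dᵢ`. The Bonferroni inequalities of orders one and two give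
`1 - ∑ zᵢ ≤ ∏ (1 - zᵢ) ≤ 1 - ∑ zᵢ + ((∑ zᵢ)² - ∑ zᵢ²) / 2`. Replacing `∑ zᵢ` by `∑ dᵢ` costs at most
`∑ dᵢ αᵢ = ∑ dᵢ² + ∑ dᵢ βᵢ`, and the off-diagonal mass `(∑ zᵢ)² - ∑ zᵢ²` is at most
`(∑ dᵢ)² - ∑ dᵢ²`, which leaves room to absorb `∑ dᵢ²` into `(∑ dᵢ)²`.
-/

open Finset

theorem sq_sum_sub_sum_sq_eq_sum_offDiag {ι R : Type*} [CommRing R] (s : Finset ι) (f : ι → R) :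
    (∑ i ∈ s, f i) ^ 2 - ∑ i ∈ s, f i ^ 2 = ∑ p ∈ s.offDiag, f p.1 * f p.2 := by
  classical
  rw [sq, sum_mul_sum, ← sum_product', ← diag_union_offDiag, sum_union (disjoint_diag_offDiag s),
    sum_diag]
  simp only [sq, add_sub_cancel_left]

section OrderedRing

variable {ι R : Type*} [CommRing R] [LinearOrder R] [IsStrictOrderedRing R]
  {s : Finset ι} {f g : ι → R}

theorem one_sub_sum_le_prod_one_sub (hf₀ : ∀ i ∈ s, 0 ≤ f i) (hf₁ : ∀ i ∈ s, f i ≤ 1) :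
    1 - ∑ i ∈ s, f i ≤ ∏ i ∈ s, (1 - f i) := by
  induction s using Finset.cons_induction with
  | empty => simp
  | cons a s ha ih =>
    simp only [forall_mem_cons] at hf₀ hf₁
    have prod_le_one : ∏ i ∈ s, (1 - f i) ≤ 1 :=
      Finset.prod_le_one (fun i hi => sub_nonneg.2 (hf₁.2 i hi))
        fun i hi => sub_le_self 1 (hf₀.2 i hi)
    rw [sum_cons, prod_cons]
    linarith [ih hf₀.2 hf₁.2, mul_le_of_le_one_right hf₀.1 prod_le_one]

theorem two_mul_prod_one_sub_le (hf₀ : ∀ i ∈ s, 0 ≤ f i) (hf₁ : ∀ i ∈ s, f i ≤ 1) :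
    2 * ∏ i ∈ s, (1 - f i)
      ≤ 2 - 2 * ∑ i ∈ s, f i + ((∑ i ∈ s, f i) ^ 2 - ∑ i ∈ s, f i ^ 2) := by
  induction s using Finset.cons_induction with
  | empty => simp
  | cons a s ha ih =>
    simp only [forall_mem_cons] at hf₀ hf₁
    have first_order : f a * (1 - ∑ i ∈ s, f i) ≤ f a * ∏ i ∈ s, (1 - f i) :=
      mul_le_mul_of_nonneg_left (one_sub_sum_le_prod_one_sub hf₀.2 hf₁.2) hf₀.1
    rw [sum_cons, sum_cons, prod_cons]
    linarith [ih hf₀.2 hf₁.2]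

theorem sq_sum_sub_sum_sq_le_of_le (hf : ∀ i ∈ s, 0 ≤ f i) (hfg : ∀ i ∈ s, f i ≤ g i) :
    (∑ i ∈ s, f i) ^ 2 - ∑ i ∈ s, f i ^ 2 ≤ (∑ i ∈ s, g i) ^ 2 - ∑ i ∈ s, g i ^ 2 := by
  simp only [sq_sum_sub_sum_sq_eq_sum_offDiag]
  refine sum_le_sum fun p hp => ?_
  obtain ⟨h₁, h₂, -⟩ := mem_offDiag.1 hp
  exact mul_le_mul (hfg _ h₁) (hfg _ h₂) (hf _ h₂) ((hf _ h₁).trans (hfg _ h₁))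

end OrderedRing

section OrderedField

variable {ι K : Type*} [Field K] [LinearOrder K] [IsStrictOrderedRing K]

theorem sub_div_one_add_le_mul {a d : K} (ha : 0 ≤ a) (hd : 0 ≤ d) : d - d / (1 + a) ≤ d * a := by
  calc d - d / (1 + a) = d * a / (1 + a) := by field_simp; ring
    _ ≤ d * a := div_le_self (mul_nonneg hd ha) (le_add_of_nonneg_right ha)

theorem abs_prod_one_sub_sub_le {s : Finset ι} {f g : ι → K} (hf₀ : ∀ i ∈ s, 0 ≤ f i)
    (hf₁ : ∀ i ∈ s, f i ≤ 1) (hfg : ∀ i ∈ s, f i ≤ g i) :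
    |∏ i ∈ s, (1 - f i) - (1 - ∑ i ∈ s, g i)|
      ≤ ((∑ i ∈ s, g i) ^ 2 - ∑ i ∈ s, g i ^ 2) / 2 + ∑ i ∈ s, (g i - f i) := by
  have lower := one_sub_sum_le_prod_one_sub hf₀ hf₁
  have upper := two_mul_prod_one_sub_le hf₀ hf₁
  have offDiag_le := sq_sum_sub_sum_sq_le_of_le hf₀ hfg
  have sum_le := sum_le_sum hfg
  rw [abs_of_nonneg (by linarith), sum_sub_distrib]
  linarith

theorem stmt_10_general {s : Finset ι} {α β : ι → K} (hα : ∀ i ∈ s, 0 ≤ α i)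
    (hβ : ∀ i ∈ s, -1 ≤ β i) (hβα : ∀ i ∈ s, β i ≤ α i) :
    |(∏ i ∈ s, (1 + β i) / (1 + α i)) - (1 + ∑ i ∈ s, β i - ∑ i ∈ s, α i)|
      ≤ (∑ i ∈ s, (α i - β i)) ^ 2 + ∑ i ∈ s, (α i - β i) * β i := by
  have hα₁ : ∀ i ∈ s, 0 < 1 + α i := fun i hi => by linarith [hα i hi]
  have hd : ∀ i ∈ s, 0 ≤ α i - β i := fun i hi => sub_nonneg.2 (hβα i hi)
  have prod_eq : ∏ i ∈ s, (1 + β i) / (1 + α i) = ∏ i ∈ s, (1 - (α i - β i) / (1 + α i)) :=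
    prod_congr rfl fun i hi => by have := (hα₁ i hi).ne'; field_simp; ring
  have linear_eq : 1 + ∑ i ∈ s, β i - ∑ i ∈ s, α i = 1 - ∑ i ∈ s, (α i - β i) := by
    rw [sum_sub_distrib]; ring
  have linear_error : ∑ i ∈ s, (α i - β i - (α i - β i) / (1 + α i))
      ≤ ∑ i ∈ s, (α i - β i) ^ 2 + ∑ i ∈ s, (α i - β i) * β i := by
    rw [← sum_add_distrib]
    refine sum_le_sum fun i hi => (sub_div_one_add_le_mul (hα i hi) (hd i hi)).trans_eq ?_
    ring
  have sum_sq_le := sum_sq_le_sq_sum_of_nonneg hd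
  rw [prod_eq, linear_eq]
  refine (abs_prod_one_sub_sub_le (fun i hi => div_nonneg (hd i hi) (hα₁ i hi).le)
    (fun i hi => (div_le_one (hα₁ i hi)).2 (by linarith [hβ i hi]))
    fun i hi => div_le_self (hd i hi) (by linarith [hα i hi])).trans ?_
  linarith

end OrderedField

/-- for nonnegative reals `α₁,…,α_k` and `β₁,…,β_k` with `βᵢ ≤ αᵢ` for all `i`,
`|∏ᵢ (1+βᵢ)/(1+αᵢ) − (1 + Σᵢ βᵢ − Σᵢ αᵢ)| ≤ (Σᵢ (αᵢ − βᵢ))² + Σᵢ (αᵢ − βᵢ)·βᵢ`. -/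
theorem stmt_10 (k : ℕ) (α β : Fin k → ℝ) (hβ : ∀ i, 0 ≤ β i) (hβα : ∀ i, β i ≤ α i) :
    |(∏ i, (1 + β i) / (1 + α i)) - (1 + ∑ i, β i - ∑ i, α i)|
      ≤ (∑ i, (α i - β i)) ^ 2 + ∑ i, (α i - β i) * β i :=
  stmt_10_general (fun i _ => (hβ i).trans (hβα i)) (fun i _ => by linarith [hβ i])
    fun i _ => hβα i
end
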